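/- Ekeland's variational principle: Let (E, d) be a complete metric space and let f : E → ℝ ∪ {+∞} be a lower semicontinuous function that is bounded from below and not identically +∞. Given ε > 0, suppose u_ε ∈ E satisfies f(u_ε) ≤ inf_{x ∈ E} f(x) + ε. Then for any λ > 0 there exists v ∈ E such that: (1) f(v) ≤ f(u_ε); (2) d(u_ε, v) ≤ λ; and (3) for every w ≠ v, f(v) < f(w) + (ε/λ) d(v, w). -/

import Mathlib

/-- Ekeland's variational principle: on a complete metric space `E`, if
`f : E → ℝ ∪ {+∞}` (modelled as `EReal`-valued, never `⊥`) is lower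
semicontinuous, bounded below by a real constant, and not identically `+∞`,
and `u` is an `ε`-approximate minimizer, then for any `λ > 0` there is `v`
with `f v ≤ f u`, `d(u, v) ≤ λ`, and `f v < f w + (ε/λ) d(v, w)` for all
`w ≠ v`. -/
theorem ekeland_variational_principle
    {E : Type*} [MetricSpace E] [CompleteSpace E]
    (f : E → EReal) (hlsc : LowerSemicontinuous f)
    (hbdd : ∃ c : ℝ, ∀ x : E, (c : EReal) ≤ f x)
    (hfin : ∃ x : E, f x ≠ ⊤)
    (ε : ℝ) (hε : 0 < ε) (u : E)
    (hu : f u ≤ (⨅ x : E, f x) + (ε : EReal))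
    (lam : ℝ) (hlam : 0 < lam) :
    ∃ v : E, f v ≤ f u ∧ dist u v ≤ lam ∧
      ∀ w : E, w ≠ v → f v < f w + ((ε / lam * dist v w : ℝ) : EReal) := by
  obtain ⟨c, hc⟩ := hbdd
  obtain ⟨x₀, hx₀⟩ := hfin
  have hbot : ∀ x, f x ≠ ⊥ := fun x h => by
    have := hc x
    rw [h] at this
    exact absurd this (by simp)
  have hu' : ∀ w, f u ≤ f w + (ε : EReal) := fun w =>
    hu.trans (add_le_add_left (iInf_le f w) _)
  obtain ⟨g, hg⟩ : ∃ g : E → ℝ, ∀ x, f x ≠ ⊤ → f x = (g x : EReal) :=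
    ⟨fun x => (f x).toReal, fun x hx => (EReal.coe_toReal hx (hbot x)).symm⟩
  have hut : f u ≠ ⊤ := by
    intro h
    have := hu' x₀
    rw [h, hg x₀ hx₀, ← EReal.coe_add] at this
    exact absurd this (by simp [-EReal.coe_add])
  have hgc : ∀ x, f x ≠ ⊤ → c ≤ g x := fun x hx => by
    have := hc x
    rw [hg x hx] at this
    exact_mod_cast this
  set k : ℝ := ε / lam with hk
  have hkpos : 0 < k := div_pos hε hlam
  let S : E → Set E := fun x => {w | f w ≠ ⊤ ∧ g w + k * dist x w ≤ g x}
  have hSself : ∀ x, f x ≠ ⊤ → x ∈ S x := fun x hx => ⟨hx, by simp⟩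
  have hStrans : ∀ x y z, y ∈ S x → z ∈ S y → z ∈ S x := by
    rintro x y z ⟨_, h1⟩ ⟨hz, h2⟩
    refine ⟨hz, ?_⟩
    have := mul_le_mul_of_nonneg_left (dist_triangle x y z) hkpos.le
    linarith
  have hstep : ∀ (x : {x // f x ≠ ⊤}) (n : ℕ), ∃ y : {x // f x ≠ ⊤},
      y.1 ∈ S x.1 ∧ ∀ w ∈ S x.1, g y.1 ≤ g w + (1 / 2 : ℝ) ^ n := by
    rintro ⟨x, hx⟩ n
    have hne : (g '' S x).Nonempty := ⟨_, x, hSself x hx, rfl⟩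
    have hbd : BddBelow (g '' S x) := ⟨c, by
      rintro _ ⟨w, hw, rfl⟩
      exact hgc w hw.1⟩
    obtain ⟨_, ⟨y, hy, rfl⟩, hlt⟩ := exists_lt_of_csInf_lt hne
      (lt_add_of_pos_right (sInf (g '' S x)) (show (0 : ℝ) < (1 / 2) ^ n by positivity))
    refine ⟨⟨y, hy.1⟩, hy, fun w hw => ?_⟩
    have := csInf_le hbd ⟨w, hw, rfl⟩
    linarith
  choose nxt hn1 hn2 using hstep
  let X : ℕ → {x // f x ≠ ⊤} := fun n => Nat.rec ⟨u, hut⟩ (fun n x => nxt x n) n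
  have hX1 : ∀ n, (X (n + 1)).1 ∈ S (X n).1 := fun n => hn1 (X n) n
  have hX2 : ∀ n, ∀ w ∈ S (X n).1, g (X (n + 1)).1 ≤ g w + (1 / 2 : ℝ) ^ n :=
    fun n => hn2 (X n) n
  have hXle : ∀ n m, n ≤ m → (X m).1 ∈ S (X n).1 := by
    intro n m h
    induction m, h using Nat.le_induction with
    | base => exact hSself _ (X n).2
    | succ m _ ih => exact hStrans _ _ _ ih (hX1 m)
  -- points of `S (X (n+1))` are close to `X (n+1)`
  have hclose : ∀ n, ∀ w ∈ S (X (n + 1)).1,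
      dist (X (n + 1)).1 w ≤ (1 / 2 : ℝ) ^ n / k := by
    intro n w hw
    have h1 := hX2 n w (hStrans _ _ _ (hX1 n) hw)
    have h2 := hw.2
    rw [le_div_iff₀ hkpos]
    linarith
  have hlim : Filter.Tendsto (fun n : ℕ => (1 / 2 : ℝ) ^ n / k) Filter.atTop (nhds 0) := by
    have := (tendsto_pow_atTop_nhds_zero_of_lt_one (r := (1 / 2 : ℝ))
      (by norm_num) (by norm_num)).div_const k
    simpa using this
  have hcau : CauchySeq (fun n => (X (n + 1)).1) := by
    refine cauchySeq_of_le_tendsto_0' (fun n : ℕ => (1 / 2 : ℝ) ^ n / k) ?_ hlim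
    intro n m hnm
    exact hclose n _ (hXle (n + 1) (m + 1) (by omega))
  obtain ⟨v, hv⟩ := cauchySeq_tendsto_of_complete hcau
  have hvS' : ∀ n, f v ≤ ((g (X n).1 - k * dist (X n).1 v : ℝ) : EReal) := by
    intro n
    by_contra hcon
    rw [not_le] at hcon
    obtain ⟨a, ha1, ha2⟩ := EReal.lt_iff_exists_real_btwn.1 hcon
    have hev := hv.eventually (hlsc v a ha2)
    have ht : Filter.Tendsto (fun m => g (X n).1 - k * dist (X n).1 (X (m + 1)).1)
        Filter.atTop (nhds (g (X n).1 - k * dist (X n).1 v)) :=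
      tendsto_const_nhds.sub ((tendsto_const_nhds.dist hv).const_mul k)
    have hle : a ≤ g (X n).1 - k * dist (X n).1 v := by
      refine ge_of_tendsto ht ?_
      filter_upwards [hev, Filter.eventually_ge_atTop n] with m hm hnm
      rw [hg _ (X (m + 1)).2] at hm
      have h1 : a < g (X (m + 1)).1 := by exact_mod_cast hm
      have h2 := (hXle n (m + 1) (by omega)).2
      linarith
    have : g (X n).1 - k * dist (X n).1 v < a := by exact_mod_cast ha1
    linarith
  have hvt : f v ≠ ⊤ := ne_top_of_le_ne_top (EReal.coe_ne_top _) (hvS' 0)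
  have hvS : ∀ n, v ∈ S (X n).1 := by
    intro n
    refine ⟨hvt, ?_⟩
    have := hvS' n
    rw [hg v hvt, EReal.coe_le_coe_iff] at this
    linarith
  have hv0 : g v + k * dist u v ≤ g u := (hvS 0).2
  have hd0 : 0 ≤ k * dist u v := mul_nonneg hkpos.le dist_nonneg
  refine ⟨v, ?_, ?_, ?_⟩
  · rw [hg v hvt, hg u hut, EReal.coe_le_coe_iff]
    linarith
  · have h1 := hu' v
    rw [hg v hvt, hg u hut, ← EReal.coe_add, EReal.coe_le_coe_iff] at h1
    have h2 : k * dist u v ≤ k * lam := by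
      have : k * lam = ε := by rw [hk]; field_simp
      linarith
    exact le_of_mul_le_mul_left h2 hkpos
  · intro w hw
    by_cases hwt : f w = ⊤
    · rw [hwt, EReal.top_add_coe]
      exact lt_top_iff_ne_top.2 hvt
    · rw [hg v hvt, hg w hwt, ← EReal.coe_add, EReal.coe_lt_coe_iff]
      by_contra hcon
      rw [not_lt] at hcon
      have hwS : w ∈ S v := ⟨hwt, hcon⟩
      have hlw : Filter.Tendsto (fun n => (X (n + 1)).1) Filter.atTop (nhds w) := by
        rw [tendsto_iff_dist_tendsto_zero]
        exact squeeze_zero (fun _ => dist_nonneg)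
          (fun n => hclose n w (hStrans _ _ _ (hvS (n + 1)) hwS)) hlim
      exact hw (tendsto_nhds_unique hlw hv)
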